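/- arXiv:1510.05190 — 4 statements merged into one kernel-verified Lean document; each statement's English description precedes it below -/
import Mathlib

section
/- For integers r ≥ k ≥ 1 and t ≥ 2, the set-Ramsey number satisfies R_{r,k}(K_t) = t if and only if r > (r−k)·binomial(t,2). Equivalently: every (r,k)-colouring of K_t contains a monochromatic copy of K_t (a colour appearing on all edges) precisely when r > (r−k)·binomial(t,2), and otherwise there is an (r,k)-colouring of K_t with no colour common to all edges. -/
/-!
For `n < t` no copy of `K_t` fits into `K_n`, while colourings exist because `k ≤ r`; hence
`R_{r,k}(K_t) = t` exactly when every `(r,k)`-colouring of `K_t` has a colour common to all edges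
(`setRamseyClique_eq_iff`). Passing to complements, a colouring of `K_t` assigns to each of its
`t.choose 2` edges a set of `r - k` missing colours, and a colour is common to all edges iff no
edge misses it. So the question is whether `t.choose 2` sets of size `r - k` can cover the `r`
colours. If `(r - k) * t.choose 2 < r` they cannot, by the union bound; otherwise they can, by
cutting the colours into consecutive blocks of length `r - k` (`exists_cover`).
-/

/-- `φ` is an `(r,k)`-colouring of `K_n`: every (non-loop) edge gets a `k`-element
set of colours from `{1,…,r}`. -/
def IsSetColoring (n r k : ℕ) (φ : Sym2 (Fin n) → Finset (Fin r)) : Prop :=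
  ∀ e : Sym2 (Fin n), ¬ e.IsDiag → (φ e).card = k

/-- The set-coloured `K_n` contains a monochromatic copy of `K_t`: there are a colour
`c` and `t` distinct vertices such that every edge between them carries colour `c`. -/
def HasMonoClique (n r t : ℕ) (φ : Sym2 (Fin n) → Finset (Fin r)) : Prop :=
  ∃ c : Fin r, ∃ f : Fin t ↪ Fin n, ∀ i j : Fin t, i ≠ j → c ∈ φ s(f i, f j)

/-- The set-Ramsey number `R_{r,k}(K_t)`: the least `n` such that every
`(r,k)`-colouring of `K_n` contains a monochromatic copy of `K_t`. -/
noncomputable def setRamseyClique (r k t : ℕ) : ℕ :=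
  sInf {n : ℕ | ∀ φ : Sym2 (Fin n) → Finset (Fin r),
    IsSetColoring n r k φ → HasMonoClique n r t φ}

/-- If `r ≤ d * C`, then `C` sets of size `d` can cover `Fin r`: the `i`-th set is any `d`-element
superset of the block of colours `c` with `c / d = i`. -/
lemma exists_cover (r d C : ℕ) (hr : 1 ≤ r) (hd : d ≤ r) (h : r ≤ d * C) :
    ∃ D : Fin C → Finset (Fin r), (∀ i, (D i).card = d) ∧ ∀ c, ∃ i, c ∈ D i := by
  have hd0 : 0 < d := by
    rcases Nat.eq_zero_or_pos d with rfl | h0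
    · omega
    · exact h0
  have key : ∀ i : Fin C, ∃ s : Finset (Fin r),
      Finset.univ.filter (fun c : Fin r => c.val / d = i.val) ⊆ s ∧ s.card = d := by
    intro i
    have hcard : (Finset.univ.filter (fun c : Fin r => c.val / d = i.val)).card ≤ d := by
      have hle := Finset.card_le_card_of_injOn
        (s := Finset.univ.filter (fun c : Fin r => c.val / d = i.val))
        (t := Finset.range d) (fun c => c.val % d)
        (fun c _ => by simpa using Nat.mod_lt _ hd0)
        (fun a ha b hb hab => by
          simp only [Finset.coe_filter, Finset.mem_univ, true_and, Set.mem_ofPred_eq] at ha hb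
          apply Fin.ext
          rw [← Nat.div_add_mod a.val d, ← Nat.div_add_mod b.val d, ha, hb]
          exact congrArg (d * i.val + ·) hab)
      simpa using hle
    obtain ⟨s, hs, hs'⟩ := Finset.exists_superset_card_eq hcard (by simpa using hd)
    exact ⟨s, hs, hs'⟩
  choose D hD hD' using key
  refine ⟨D, hD', fun c => ⟨⟨c.val / d, ?_⟩, hD _ (by simp)⟩⟩
  exact Nat.div_lt_of_lt_mul (lt_of_lt_of_le c.isLt h)

/-- A monochromatic `K_t` in a coloured `K_t` uses all vertices, so it is a colour common to all
edges. -/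
lemma hasMonoClique_self_iff (r t : ℕ) (φ : Sym2 (Fin t) → Finset (Fin r)) :
    HasMonoClique t r t φ ↔ ∃ c, ∀ e : Sym2 (Fin t), ¬ e.IsDiag → c ∈ φ e := by
  constructor
  · rintro ⟨c, f, hf⟩
    refine ⟨c, fun e => ?_⟩
    induction e using Sym2.ind with
    | _ x y =>
      intro hxy
      have hsurj : Function.Surjective f := Finite.surjective_of_injective f.injective
      obtain ⟨i, rfl⟩ := hsurj x
      obtain ⟨j, rfl⟩ := hsurj y
      exact hf i j (fun hij => hxy (by simp [hij]))
  · rintro ⟨c, hc⟩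
    exact ⟨c, Function.Embedding.refl _, fun i j hij => hc _ (by simpa using hij)⟩

/-- The union bound and the block covering, translated into colourings by complementation. -/
lemma forall_hasMonoClique_iff (r k t : ℕ) (hk : 1 ≤ k) (hrk : k ≤ r) :
    (∀ φ : Sym2 (Fin t) → Finset (Fin r), IsSetColoring t r k φ → HasMonoClique t r t φ) ↔
      (r - k) * t.choose 2 < r := by
  classical
  have hE : Fintype.card {e : Sym2 (Fin t) // ¬ e.IsDiag} = t.choose 2 := by
    rw [Sym2.card_subtype_not_diag, Fintype.card_fin]
  constructor
  · intro h
    by_contra! hle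
    obtain ⟨D, hD, hcov⟩ := exists_cover r (r - k) (t.choose 2) (hk.trans hrk) (by omega) hle
    let ε := Fintype.equivFinOfCardEq hE
    -- On loops the value is irrelevant.
    let φ : Sym2 (Fin t) → Finset (Fin r) :=
      fun e => if he : ¬ e.IsDiag then (D (ε ⟨e, he⟩))ᶜ else ∅
    obtain ⟨c, hc⟩ := (hasMonoClique_self_iff r t φ).1 (h φ (fun e he => by
      simp only [φ, dif_pos he, Finset.card_compl, Fintype.card_fin, hD]
      omega))
    obtain ⟨i, hi⟩ := hcov c
    have := hc (ε.symm i).1 (ε.symm i).2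
    simp only [φ, dif_pos (ε.symm i).2, Subtype.coe_eta, Equiv.apply_symm_apply,
      Finset.mem_compl] at this
    exact this hi
  · intro h φ hφ
    rw [hasMonoClique_self_iff]
    by_contra! hno
    have hcover : (Finset.univ : Finset (Fin r)) ⊆
        (Finset.univ : Finset {e : Sym2 (Fin t) // ¬ e.IsDiag}).biUnion (fun e => (φ e.1)ᶜ) := by
      intro c _
      obtain ⟨e, he, hce⟩ := hno c
      exact Finset.mem_biUnion.2 ⟨⟨e, he⟩, Finset.mem_univ _, Finset.mem_compl.2 hce⟩
    have h1 := Finset.card_le_card hcover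
    have h2 := Finset.card_biUnion_le_card_mul
      (Finset.univ : Finset {e : Sym2 (Fin t) // ¬ e.IsDiag}) (fun e => (φ e.1)ᶜ) (r - k)
      (fun e _ => by rw [Finset.card_compl, Fintype.card_fin, hφ e.1 e.2])
    rw [Finset.card_univ, Fintype.card_fin] at h1
    rw [Finset.card_univ, hE, mul_comm] at h2
    omega

lemma setRamseyClique_eq_iff (r k t : ℕ) (hrk : k ≤ r) (ht : 2 ≤ t) :
    setRamseyClique r k t = t ↔
      ∀ φ : Sym2 (Fin t) → Finset (Fin r), IsSetColoring t r k φ → HasMonoClique t r t φ := by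
  constructor
  · intro h
    -- The infimum is `t ≠ 0`, so it is not the junk value of the empty set.
    have hmem := Nat.sInf_mem (Nat.nonempty_of_pos_sInf
      (show 0 < setRamseyClique r k t by omega))
    change setRamseyClique r k t ∈ _ at hmem
    rw [h] at hmem
    exact hmem
  · intro h
    refine le_antisymm (Nat.sInf_le h) (le_csInf ⟨t, h⟩ fun n hn => ?_)
    obtain ⟨s, -, hs⟩ := Finset.exists_subset_card_eq
      (s := (Finset.univ : Finset (Fin r))) (n := k) (by simpa using hrk)
    obtain ⟨-, f, -⟩ := hn (fun _ => s) (fun _ _ => hs)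
    simpa using Fintype.card_le_of_embedding f

/-- **Observation.** For `r ≥ k ≥ 1` and `t ≥ 2`, the set-Ramsey number satisfies
`R_{r,k}(K_t) = t` if and only if `r > (r - k)·(t choose 2)`. -/
theorem setRamsey_eq_t_iff (r k t : ℕ) (hk : 1 ≤ k) (hrk : k ≤ r) (ht : 2 ≤ t) :
    setRamseyClique r k t = t ↔ (r - k) * t.choose 2 < r := by
  rw [setRamseyClique_eq_iff r k t hrk ht, forall_hasMonoClique_iff r k t hk hrk]
end

section
/- Let t ≥ 2, r > k ≥ 1, and ε ∈ (0,1) with (t−2)/(t−1) = (1−ε)·(k/r). Then the set-Ramsey number satisfies R_{r,k}(K_t) ≤ 1/ε + 1; equivalently, every (r,k)-colouring of K_n with no monochromatic copy of K_t has n ≤ 1/ε. Moreover, this bound is sharp when k = r−1 = t−1 is a prime power, in which case R_{r,k}(K_t) = k² + 1. -/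
open Finset

/-- The graph on the vertices of `K_n` formed by the edges that carry the colour `c`. -/
def colorGraph {n r : ℕ} (φ : Sym2 (Fin n) → Finset (Fin r)) (c : Fin r) :
    SimpleGraph (Fin n) :=
  SimpleGraph.fromEdgeSet {e | c ∈ φ e}

lemma colorGraph_cliqueFree {n r t : ℕ} {φ : Sym2 (Fin n) → Finset (Fin r)}
    (h : ¬ HasMonoClique n r t φ) (c : Fin r) : (colorGraph φ c).CliqueFree t := by
  by_contra hc
  obtain ⟨f⟩ := SimpleGraph.not_cliqueFree_iff_top_isContained t |>.1 hc
  refine h ⟨c, f.toEmbedding, fun i j hij => ?_⟩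
  have := f.toHom.map_adj ((SimpleGraph.top_adj i j).2 hij)
  exact ((SimpleGraph.fromEdgeSet_adj _).1 this).1

open Classical in
/-- Double counting of the pairs (edge of `K_n`, colour of that edge). -/
lemma sum_card_edgeFinset_colorGraph {n r k : ℕ} {φ : Sym2 (Fin n) → Finset (Fin r)}
    (h : IsSetColoring n r k φ) :
    ∑ c : Fin r, #(colorGraph φ c).edgeFinset = n.choose 2 * k := by
  have h1 : ∀ c : Fin r, (colorGraph φ c).edgeFinset =
      (⊤ : SimpleGraph (Fin n)).edgeFinset.filter (fun e => c ∈ φ e) := by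
    intro c
    ext e
    rw [SimpleGraph.mem_edgeFinset]
    simp [colorGraph, and_comm]
  have h2 := Finset.sum_card_bipartiteAbove_eq_sum_card_bipartiteBelow
    (s := (univ : Finset (Fin r))) (t := (⊤ : SimpleGraph (Fin n)).edgeFinset)
    (fun c e => c ∈ φ e)
  simp only [Finset.bipartiteAbove, Finset.bipartiteBelow] at h2
  simp only [h1]
  rw [h2, Finset.sum_congr rfl (g := fun _ => k)]
  · rw [Finset.sum_const, SimpleGraph.card_edgeFinset_top_eq_card_choose_two, Fintype.card_fin,
      smul_eq_mul]
  · intro e he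
    rw [Finset.filter_mem_eq_inter, Finset.univ_inter]
    exact h e (by simpa using he)

lemma le_inv_of_not_hasMonoClique {n r k t : ℕ} (ht : 2 ≤ t) (hk : 1 ≤ k) (hrk : k < r)
    {ε : ℝ} (hε0 : 0 < ε)
    (heq : ((t : ℝ) - 2) / ((t : ℝ) - 1) = (1 - ε) * ((k : ℝ) / (r : ℝ)))
    {φ : Sym2 (Fin n) → Finset (Fin r)} (hφ : IsSetColoring n r k φ)
    (hmono : ¬ HasMonoClique n r t φ) : (n : ℝ) ≤ 1 / ε := by
  classical
  rcases Nat.eq_zero_or_pos n with rfl | hn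
  · simp [hε0.le]
  have hn' : (0 : ℝ) < n := by exact_mod_cast hn
  have hk' : (0 : ℝ) < k := by exact_mod_cast hk
  have hr' : (0 : ℝ) < r := by exact_mod_cast (by omega : 0 < r)
  obtain ⟨s, rfl⟩ : ∃ s, t = s + 1 := ⟨t - 1, by omega⟩
  have hs : (0 : ℝ) < s := by exact_mod_cast (by omega : 0 < s)
  have hturan : ∀ c : Fin r, (#(colorGraph φ c).edgeFinset : ℝ) ≤
      (1 - ε) * (k / r) * n ^ 2 / 2 := by
    intro c
    have h1 : #(colorGraph φ c).edgeFinset ≤ #(SimpleGraph.turanGraph n s).edgeFinset := by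
      convert (SimpleGraph.isTuranMaximal_turanGraph (n := n) (r := s) (by omega)).2
        (colorGraph_cliqueFree hmono c)
    have h2 : 2 * s * #(colorGraph φ c).edgeFinset ≤ (s - 1) * n ^ 2 :=
      (Nat.mul_le_mul_left _ h1).trans SimpleGraph.mul_card_edgeFinset_turanGraph_le
    have h3 : (2 * s * #(colorGraph φ c).edgeFinset : ℝ) ≤ (s - 1) * n ^ 2 := by
      have := (Nat.cast_le (α := ℝ)).2 h2
      rwa [Nat.cast_mul, Nat.cast_mul, Nat.cast_mul, Nat.cast_pow, Nat.cast_sub (by omega),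
        Nat.cast_two, Nat.cast_one] at this
    have h4 : (((s + 1 : ℕ) : ℝ) - 2) / (((s + 1 : ℕ) : ℝ) - 1) = (s - 1) / s := by
      push_cast
      congr 1 <;> ring
    rw [← heq, h4, div_mul_eq_mul_div, div_div, le_div_iff₀ (by positivity)]
    linarith
  have hsum : ((n.choose 2 * k : ℕ) : ℝ) ≤ r * ((1 - ε) * (k / r) * n ^ 2 / 2) := by
    rw [← sum_card_edgeFinset_colorGraph hφ, Nat.cast_sum]
    calc _ ≤ ∑ _c : Fin r, (1 - ε) * ((k : ℝ) / r) * n ^ 2 / 2 :=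
          Finset.sum_le_sum fun c _ => hturan c
      _ = _ := by simp
  rw [Nat.cast_mul, Nat.cast_choose_two] at hsum
  have h3 : (r : ℝ) * ((1 - ε) * (k / r) * n ^ 2 / 2) = (n * k / 2) * ((1 - ε) * n) := by
    field_simp
  have h4 : (n * k / 2 : ℝ) * (n - 1) ≤ (n * k / 2) * ((1 - ε) * n) := by
    rw [← h3]; linarith
  have h5 := le_of_mul_le_mul_left h4 (by positivity)
  rw [le_div_iff₀ hε0]
  linarith

/-- The line of the parallel class `c` through a point of the affine plane, recorded by its
intercept: the class `none` consists of the vertical lines, `some a` of those of slope `a`. -/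
def lineThrough {F : Type*} [Field F] : Option F → F × F → F
  | none, p => p.1
  | some a, p => p.2 - a * p.1

lemma existsUnique_lineThrough_eq {F : Type*} [Field F] {p q : F × F} (h : p ≠ q) :
    ∃! c : Option F, lineThrough c p = lineThrough c q := by
  obtain ⟨x, y⟩ := p
  obtain ⟨u, v⟩ := q
  by_cases hx : x = u
  · subst hx
    refine ⟨none, rfl, ?_⟩
    rintro (_ | a) ha
    · rfl
    · exact absurd (by simpa [lineThrough] using ha) (fun hy : y = v => h (by rw [hy]))
  · have hx' : x - u ≠ 0 := sub_ne_zero.2 hx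
    refine ⟨some ((y - v) / (x - u)), ?_, ?_⟩
    · simp only [lineThrough]
      field_simp
      ring
    · rintro (_ | a) ha
      · exact absurd ha hx
      · simp only [lineThrough] at ha
        rw [Option.some_inj, eq_div_iff hx']
        linear_combination -ha

lemma exists_coloring_of_isPrimePow {n k : ℕ} (hk : IsPrimePow k) (hn : n ≤ k ^ 2) :
    ∃ φ : Sym2 (Fin n) → Finset (Fin (k + 1)),
      IsSetColoring n (k + 1) k φ ∧ ¬ HasMonoClique n (k + 1) (k + 1) φ := by
  classical
  obtain ⟨p, m, hp, hm, rfl⟩ := (isPrimePow_nat_iff k).1 hk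
  have : Fact p.Prime := ⟨hp⟩
  let F := GaloisField p m
  have : Fintype F := Fintype.ofFinite F
  have hF : Fintype.card F = p ^ m := by
    rw [← Nat.card_eq_fintype_card]; exact GaloisField.card p m hm.ne'
  obtain ⟨g⟩ : Nonempty (Fin n ↪ F × F) :=
    Function.Embedding.nonempty_of_card_le (by simpa [hF, ← sq] using hn)
  obtain ⟨e⟩ : Nonempty (Fin (p ^ m + 1) ≃ Option F) :=
    ⟨Fintype.equivOfCardEq (by simp [hF])⟩
  -- A pair of points avoids the colour of the parallel class whose line joins them.
  let φ : Sym2 (Fin n) → Finset (Fin (p ^ m + 1)) := Sym2.lift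
    ⟨fun i j => univ.filter fun c => lineThrough (e c) (g i) ≠ lineThrough (e c) (g j),
      fun i j => by simp only [ne_comm]⟩
  have hφ : ∀ i j c, c ∈ φ s(i, j) ↔ lineThrough (e c) (g i) ≠ lineThrough (e c) (g j) := by
    intro i j c
    simp [φ]
  refine ⟨φ, ?_, ?_⟩
  · intro d
    induction d with | _ i j
    intro hij
    obtain ⟨c, hc, hu⟩ := existsUnique_lineThrough_eq (g.injective.ne (by simpa using hij))
    have : φ s(i, j) = univ.erase (e.symm c) := by
      ext b
      rw [hφ, mem_erase, ne_eq, ne_eq, and_iff_left (mem_univ b), Equiv.eq_symm_apply]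
      exact not_congr ⟨hu _, fun h => h ▸ hc⟩
    rw [this, card_erase_of_mem (mem_univ _), card_univ, Fintype.card_fin, Nat.add_sub_cancel]
  · rintro ⟨c, f, hf⟩
    -- The points of a clique in colour `c` lie on distinct lines of class `c`.
    have hinj : Function.Injective fun i => lineThrough (e c) (g (f i)) := by
      intro i j hij
      by_contra hne
      exact (hφ _ _ _).1 (hf i j hne) hij
    have := Fintype.card_le_of_injective _ hinj
    rw [Fintype.card_fin, hF] at this
    omega

/-- **Proposition (Turán bound).** Let `t ≥ 2`, `r > k ≥ 1` and `ε ∈ (0,1)` with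
`(t-2)/(t-1) = (1-ε)·(k/r)`. Then `R_{r,k}(K_t) ≤ 1/ε + 1`. Moreover, if
`k = r - 1 = t - 1` is a prime power, then `R_{r,k}(K_t) = k² + 1`. -/
theorem setRamsey_turan_bound (r k t : ℕ) (ht : 2 ≤ t) (hk : 1 ≤ k) (hrk : k < r)
    (ε : ℝ) (hε0 : 0 < ε) (hε1 : ε < 1)
    (heq : ((t : ℝ) - 2) / ((t : ℝ) - 1) = (1 - ε) * ((k : ℝ) / (r : ℝ))) :
    (setRamseyClique r k t : ℝ) ≤ 1 / ε + 1 ∧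
    (k = r - 1 → k = t - 1 → IsPrimePow k → setRamseyClique r k t = k ^ 2 + 1) := by
  have hmem : ⌊1 / ε⌋₊ + 1 ∈ {n : ℕ | ∀ φ : Sym2 (Fin n) → Finset (Fin r),
      IsSetColoring n r k φ → HasMonoClique n r t φ} := by
    intro φ hφ
    by_contra hmono
    have h := le_inv_of_not_hasMonoClique ht hk hrk hε0 heq hφ hmono
    have h' := Nat.lt_floor_add_one (1 / ε)
    push_cast at h
    linarith
  have hle : setRamseyClique r k t ≤ ⌊1 / ε⌋₊ + 1 := Nat.sInf_le hmem
  refine ⟨?_, ?_⟩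
  · calc (setRamseyClique r k t : ℝ) ≤ ((⌊1 / ε⌋₊ + 1 : ℕ) : ℝ) := by exact_mod_cast hle
      _ ≤ 1 / ε + 1 := by
        push_cast
        gcongr
        exact Nat.floor_le (by positivity)
  · intro h1 h2 hpp
    obtain rfl : r = k + 1 := by omega
    obtain rfl : t = k + 1 := by omega
    -- Here `(k-1)/k = (1-ε) k/(k+1)`, so `ε = 1/k²`.
    have hε : 1 / ε = ((k ^ 2 : ℕ) : ℝ) := by
      have hk' : (0 : ℝ) < k := by exact_mod_cast hk
      push_cast at heq ⊢
      rw [add_sub_cancel_right] at heq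
      field_simp at heq ⊢
      linarith
    rw [hε, Nat.floor_natCast] at hle hmem
    refine le_antisymm hle ?_
    by_contra! hlt
    obtain ⟨φ, hφ, hmono⟩ := exists_coloring_of_isPrimePow hpp (Nat.lt_succ_iff.1 hlt)
    exact hmono (Nat.sInf_mem ⟨_, hmem⟩ φ hφ)
end

section
/- For every odd integer ℓ ≥ 3 and all integers r ≥ k ≥ 2, the set-Ramsey number of the cycle C_ℓ satisfies R_{r,k}(C_ℓ) > max{ 2^{(r−1)/(k−1)}, 2^{⌊r/k⌋−1}·(ℓ−1) }, where 2^{(r−1)/(k−1)} is interpreted as a real power. Equivalently, there exist (r,k)-colourings of the complete graphs on ⌊2^{(r−1)/(k−1)}⌋ and on 2^{⌊r/k⌋−1}(ℓ−1) vertices containing no monochromatic copy of C_ℓ. -/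
/-- The set-coloured `K_n` contains a monochromatic copy of the cycle `C_ℓ`: there are
a colour `c` and `ℓ` distinct vertices, cyclically ordered, with all consecutive edges
carrying colour `c`. -/
def HasMonoCycle (n r ℓ : ℕ) (φ : Sym2 (Fin n) → Finset (Fin r)) : Prop :=
  ∃ c : Fin r, ∃ f : Fin ℓ ↪ Fin n,
    ∀ i : Fin ℓ, c ∈ φ s(f i, f ⟨(i.val + 1) % ℓ, Nat.mod_lt _ i.pos⟩)

/-- The set-Ramsey number `R_{r,k}(C_ℓ)`: the least `n` such that every
`(r,k)`-colouring of `K_n` contains a monochromatic copy of `C_ℓ`. -/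
noncomputable def setRamseyCycle (r k ℓ : ℕ) : ℕ :=
  sInf {n : ℕ | ∀ φ : Sym2 (Fin n) → Finset (Fin r),
    IsSetColoring n r k φ → HasMonoCycle n r ℓ φ}

open Finset

/-! ### The Ramsey theorem -/

/-- Multicolour Ramsey theorem, with a target clique size `s c` for each colour `c`. -/
lemma exists_mono_clique {K : Type} [Fintype K] [DecidableEq K] (M : ℕ) :
    ∀ s : K → ℕ, ∑ c, s c = M → ∃ n : ℕ, ∀ (V : Type) [DecidableEq V] (χ : Sym2 V → K)
      (S : Finset V), n < S.card → ∃ c, ∃ T ⊆ S, T.card = s c ∧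
        ∀ a ∈ T, ∀ b ∈ T, a ≠ b → χ s(a, b) = c := by
  induction M with
  | zero =>
    intro s hs
    refine ⟨0, fun V _ χ S hS => ?_⟩
    obtain ⟨v, hv⟩ := card_pos.mp hS
    refine ⟨χ s(v, v), ∅, by simp, ?_, by simp⟩
    have := (sum_eq_zero_iff.mp hs) (χ s(v, v)) (mem_univ _)
    simp [this]
  | succ M ih =>
    intro s hs
    by_cases h0 : ∃ c, s c = 0
    · obtain ⟨c, hc⟩ := h0
      exact ⟨0, fun V _ χ S hS => ⟨c, ∅, by simp, by simp [hc], by simp⟩⟩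
    push Not at h0
    have key : ∀ c, ∃ n : ℕ, ∀ (V : Type) [DecidableEq V] (χ : Sym2 V → K)
      (S : Finset V), n < S.card → ∃ d, ∃ T ⊆ S,
        T.card = (Function.update s c (s c - 1)) d ∧
        ∀ a ∈ T, ∀ b ∈ T, a ≠ b → χ s(a, b) = d := by
      intro c
      apply ih
      have h1 := sum_update_of_mem (mem_univ c) s (s c - 1)
      have h2 := Finset.add_sum_erase univ s (mem_univ c)
      rw [← Finset.sdiff_singleton_eq_erase] at h2
      have := h0 c
      omega
    choose n hn using key
    refine ⟨∑ c, n c + 1, fun V _ χ S hS => ?_⟩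
    obtain ⟨v, hv⟩ : S.Nonempty := card_pos.mp (by omega)
    -- Pigeonhole on the colours of the edges from `v` to the rest of `S`.
    obtain ⟨c, hc⟩ : ∃ c, n c < ((S.erase v).filter (fun w => χ s(v, w) = c)).card := by
      by_contra! hcon
      have h1 := card_eq_sum_card_fiberwise (f := fun w => χ s(v, w)) (s := S.erase v)
        (t := univ) (by simp)
      have h2 := sum_le_sum (s := univ) (fun c _ => hcon c)
      rw [card_erase_of_mem hv] at h1
      omega
    obtain ⟨d, T, hTS, hT, hmono⟩ := hn c V χ _ hc
    by_cases hd : d = c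
    · subst hd
      have hvT : v ∉ T := fun h => by simpa using hTS h
      refine ⟨d, insert v T, ?_, ?_, ?_⟩
      · intro x hx
        rcases mem_insert.mp hx with rfl | hx
        · exact hv
        · have := hTS hx
          simp at this
          exact this.1.2
      · rw [card_insert_of_notMem hvT, hT]
        have := h0 d
        simp
        omega
      · intro a ha b hb hab
        rcases mem_insert.mp ha with rfl | haT
        · rcases mem_insert.mp hb with rfl | hb
          · exact absurd rfl hab
          · exact (mem_filter.mp (hTS hb)).2
        · rcases mem_insert.mp hb with rfl | hb
          · rw [Sym2.eq_swap]
            exact (mem_filter.mp (hTS haT)).2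
          · exact hmono a haT b hb hab
    · refine ⟨d, T, ?_, by simpa [hd] using hT, hmono⟩
      exact hTS.trans ((filter_subset _ _).trans (erase_subset _ _))

lemma succ_mod_ne {ℓ : ℕ} (hℓ : 2 ≤ ℓ) (i : Fin ℓ) :
    i ≠ ⟨(i.val + 1) % ℓ, Nat.mod_lt _ i.pos⟩ := by
  intro h
  have h := congrArg Fin.val h
  simp only at h
  have hi := i.isLt
  rcases Nat.lt_or_ge (i.val + 1) ℓ with h1 | h1
  · rw [Nat.mod_eq_of_lt h1] at h
    omega
  · have : i.val + 1 = ℓ := by omega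
    rw [this, Nat.mod_self] at h
    omega

/-- The set whose infimum is `setRamseyCycle r k ℓ` is nonempty. -/
lemma setRamsey_nonempty (r k ℓ : ℕ) (hk : 1 ≤ k) (hrk : k ≤ r) (hℓ : 2 ≤ ℓ) :
    {n : ℕ | ∀ φ : Sym2 (Fin n) → Finset (Fin r),
      IsSetColoring n r k φ → HasMonoCycle n r ℓ φ}.Nonempty := by
  obtain ⟨n, hn⟩ := exists_mono_clique (K := Fin r) _ (fun _ => ℓ) rfl
  refine ⟨n + 1, fun φ hφ => ?_⟩
  have hne : ∀ e : Sym2 (Fin (n + 1)), ∃ c : Fin r, ¬ e.IsDiag → c ∈ φ e := by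
    intro e
    by_cases he : e.IsDiag
    · exact ⟨⟨0, by omega⟩, fun h => absurd he h⟩
    · obtain ⟨c, hc⟩ : (φ e).Nonempty := card_pos.mp (by rw [hφ e he]; omega)
      exact ⟨c, fun _ => hc⟩
  choose χ hχ using hne
  obtain ⟨c, T, -, hT, hmono⟩ := hn (Fin (n + 1)) χ univ (by simp)
  let f := T.orderEmbOfFin hT
  refine ⟨c, f.toEmbedding, fun i => ?_⟩
  have hab : f i ≠ f ⟨(i.val + 1) % ℓ, Nat.mod_lt _ i.pos⟩ := fun h =>
    succ_mod_ne hℓ i (f.injective h)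
  have h1 := hχ s(f i, f ⟨(i.val + 1) % ℓ, Nat.mod_lt _ i.pos⟩) (by simpa using hab)
  rwa [hmono _ (T.orderEmbOfFin_mem hT i) _ (T.orderEmbOfFin_mem hT _) hab] at h1

/-! ### Lower bounds from colourings -/

/-- A colouring of the pairs of a finite set `V` by at least `k` of `r` colours, without
monochromatic `C_ℓ`, forces `|V| < R_{r,k}(C_ℓ)`. -/
lemma card_lt_setRamseyCycle {r k ℓ : ℕ} (hk : 1 ≤ k) (hrk : k ≤ r) (hℓ : 2 ≤ ℓ)
    {V : Type} [Fintype V] (C : V → V → Finset (Fin r)) (hsymm : ∀ a b, C a b = C b a)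
    (hC : ∀ a b, a ≠ b → k ≤ (C a b).card)
    (hno : ∀ c, ∀ f : Fin ℓ → V, Function.Injective f →
      ¬ ∀ i : Fin ℓ, c ∈ C (f i) (f ⟨(i.val + 1) % ℓ, Nat.mod_lt _ i.pos⟩)) :
    Fintype.card V < setRamseyCycle r k ℓ := by
  by_contra! hle
  have hmem := Nat.sInf_mem (setRamsey_nonempty r k ℓ hk hrk hℓ)
  change ∀ φ : Sym2 (Fin (setRamseyCycle r k ℓ)) → Finset (Fin r),
    IsSetColoring (setRamseyCycle r k ℓ) r k φ → HasMonoCycle (setRamseyCycle r k ℓ) r ℓ φ at hmem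
  generalize setRamseyCycle r k ℓ = n at hle hmem
  let g : Fin n → V := fun x => (Fintype.equivFin V).symm (Fin.castLE hle x)
  have hg : Function.Injective g := fun x y h => by
    simpa [g] using h
  let ψ : Sym2 (Fin n) → Finset (Fin r) :=
    Sym2.lift ⟨fun x y => C (g x) (g y), fun x y => hsymm _ _⟩
  have hsub : ∀ e : Sym2 (Fin n), ∃ s ⊆ ψ e, ¬ e.IsDiag → s.card = k := by
    intro e
    by_cases he : e.IsDiag
    · exact ⟨∅, by simp, fun h => absurd he h⟩
    · induction e using Sym2.ind with
      | _ x y =>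
        obtain ⟨s, hs, hsc⟩ := exists_subset_card_eq
          (hC (g x) (g y) (hg.ne (by simpa using he)))
        exact ⟨s, hs, fun _ => hsc⟩
  choose φ hφ hφk using hsub
  obtain ⟨c, f, hf⟩ := hmem φ hφk
  exact hno c (fun i => g (f i)) (hg.comp f.injective) fun i => hφ _ (hf i)

/-- A closed walk of odd length is not properly 2-coloured. -/
lemma no_odd_cycle {ℓ : ℕ} (hodd : Odd ℓ) (h : Fin ℓ → ZMod 2)
    (hh : ∀ i : Fin ℓ, h i ≠ h ⟨(i.val + 1) % ℓ, Nat.mod_lt _ i.pos⟩) : False := by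
  have hpos : 0 < ℓ := hodd.pos
  have step : ∀ a b : ZMod 2, a ≠ b → b = a + 1 := by decide
  have key : ∀ n : ℕ, h ⟨n % ℓ, Nat.mod_lt _ hpos⟩ = h ⟨0, hpos⟩ + (n : ZMod 2) := by
    intro n
    induction n with
    | zero => simp
    | succ n ih =>
      have h1 := step _ _ (hh ⟨n % ℓ, Nat.mod_lt _ hpos⟩)
      simp only [Nat.mod_add_mod] at h1
      rw [h1, ih]
      push_cast
      ring
  have h1 := key ℓ
  have h2 : (ℓ : ZMod 2) = 1 := ZMod.natCast_eq_one_iff_odd.mpr hodd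
  simp [h2] at h1

/-- A binary code with word set `V`, index set `I` with `|I| ≤ r`, and minimum distance at least
`k` yields `|V| < R_{r,k}(C_ℓ)`. -/
lemma code_lower {r k ℓ : ℕ} (hk : 1 ≤ k) (hrk : k ≤ r) (hℓ : 2 ≤ ℓ) (hodd : Odd ℓ)
    {V I : Type} [Fintype V] [Fintype I] (hI : Fintype.card I ≤ r) (w : V → I → ZMod 2)
    (hw : ∀ a b, a ≠ b → k ≤ ∑ i, if w a i ≠ w b i then 1 else 0) :
    Fintype.card V < setRamseyCycle r k ℓ := by
  obtain ⟨e⟩ : Nonempty (I ↪ Fin r) :=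
    Function.Embedding.nonempty_of_card_le (by simpa using hI)
  refine card_lt_setRamseyCycle hk hrk hℓ
    (fun a b => (univ.filter fun i => w a i ≠ w b i).map e) ?_ ?_ ?_
  · intro a b
    simp only [ne_comm]
  · intro a b hab
    rw [card_map, card_filter]
    exact hw a b hab
  · intro c f _ hf
    obtain ⟨i, -, rfl⟩ := mem_map.mp (hf ⟨0, by omega⟩)
    refine no_odd_cycle hodd (fun j => w (f j) i) fun j => ?_
    simpa using hf j

/-! ### The codes -/

/-- Appending a parity bit to all bit strings gives distance at least `2`. -/
lemma two_le_parity_dist {m : ℕ} (x y : Fin m → ZMod 2) (hxy : x ≠ y) :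
    2 ≤ (if ∑ i, x i ≠ ∑ i, y i then 1 else 0) + ∑ i, if x i ≠ y i then 1 else 0 := by
  rw [← card_filter]
  obtain ⟨i, hi⟩ := Function.ne_iff.mp hxy
  have hmem : i ∈ univ.filter fun i => x i ≠ y i := by simpa using hi
  have h1 : 0 < (univ.filter fun i => x i ≠ y i).card := card_pos.mpr ⟨i, hmem⟩
  by_cases h2 : (univ.filter fun i => x i ≠ y i).card = 1
  · have hne : ∑ i, x i ≠ ∑ i, y i := by
      intro h
      obtain ⟨i', hi'⟩ := card_eq_one.mp h2
      rw [hi', mem_singleton] at hmem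
      subst hmem
      have h3 : ∑ j ∈ univ.erase i, x j = ∑ j ∈ univ.erase i, y j := by
        refine sum_congr rfl fun j hj => ?_
        by_contra hne
        have : j ∈ univ.filter fun i => x i ≠ y i := by simpa using hne
        rw [hi', mem_singleton] at this
        simp [this] at hj
      rw [← add_sum_erase univ x (mem_univ i), ← add_sum_erase univ y (mem_univ i), h3] at h
      exact hi (add_right_cancel h)
    rw [if_pos hne]
    omega
  · omega

/-- `j` copies of the parity code on `m` bits, followed by `e ≤ 1` copies of a map `d` which
separates all pairs of strings except possibly some at distance at least `3`, form a code with
`2^m` words and distance at least `2j + e`. -/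
lemma parity_code_lower {r ℓ m j e : ℕ} (hj : 1 ≤ j) (he : e ≤ 1) (hrk : 2 * j + e ≤ r)
    (hℓ : 2 ≤ ℓ) (hodd : Odd ℓ) {J : Type} [Fintype J]
    (d : (Fin m → ZMod 2) → J → ZMod 2)
    (hd : ∀ x y, x ≠ y → d x ≠ d y ∨ 3 ≤ ∑ i, if x i ≠ y i then 1 else 0)
    (hr : j * (m + 1) + e * Fintype.card J ≤ r) :
    2 ^ m < setRamseyCycle r (2 * j + e) ℓ := by
  have h := code_lower (k := 2 * j + e) (r := r) (by omega) hrk hℓ hodd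
    (V := Fin m → ZMod 2) (I := (Fin j × Option (Fin m)) ⊕ (Fin e × J)) (by simpa using hr)
    (fun x => Sum.elim (fun p => p.2.elim (∑ i, x i) x) (fun p => d x p.2)) ?_
  · simpa using h
  intro x y hxy
  have h2 := two_le_parity_dist x y hxy
  rw [Fintype.sum_sum_type, Fintype.sum_prod_type, Fintype.sum_prod_type]
  change 2 * j + e ≤ (∑ _a : Fin j, ∑ o : Option (Fin m),
      if o.elim (∑ i, x i) x ≠ o.elim (∑ i, y i) y then 1 else 0) +
    ∑ _a : Fin e, ∑ i, if d x i ≠ d y i then 1 else 0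
  rw [sum_const, sum_const, Fintype.sum_option, card_univ, card_univ, Fintype.card_fin,
    Fintype.card_fin, smul_eq_mul, smul_eq_mul]
  change 2 * j + e ≤ j * ((if ∑ i, x i ≠ ∑ i, y i then 1 else 0) +
    ∑ i, if x i ≠ y i then 1 else 0) + e * ∑ i, if d x i ≠ d y i then 1 else 0
  have hd' := hd x y hxy
  generalize (∑ i, if x i ≠ y i then 1 else 0) = W at h2 hd' ⊢
  generalize (if ∑ i, x i ≠ ∑ i, y i then 1 else 0) = P at h2 ⊢
  rcases hd' with h3 | h3
  · obtain ⟨i, hi⟩ := Function.ne_iff.mp h3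
    have h4 : 1 ≤ ∑ i, if d x i ≠ d y i then 1 else 0 := by
      rw [← card_filter]
      exact card_pos.mpr ⟨i, by simpa using hi⟩
    nlinarith [Nat.mul_le_mul_left j h2, Nat.mul_le_mul_left e h4]
  · have h4 : 3 ≤ P + W := by omega
    have := Nat.mul_le_mul_left j h4
    have : 0 ≤ e * ∑ i, if d x i ≠ d y i then 1 else 0 := Nat.zero_le _
    omega

/-- Two antipodal words. -/
lemma two_lt {r k ℓ : ℕ} (hk : 1 ≤ k) (hrk : k ≤ r) (hℓ : 2 ≤ ℓ) (hodd : Odd ℓ) :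
    2 < setRamseyCycle r k ℓ := by
  have h := code_lower hk hrk hℓ hodd (V := ZMod 2) (I := Fin r) (by simp) (fun x _ => x) ?_
  · simpa using h
  · intro a b hab
    simpa [hab] using hrk

/-- Four words: copies of the parity code on two bits, followed for odd `k` by the bits themselves. -/
lemma four_lt {r k ℓ : ℕ} (hk : 2 ≤ k) (hrk : k ≤ r) (hℓ : 2 ≤ ℓ) (hodd : Odd ℓ)
    (hr : 3 * k ≤ 2 * r) : 4 < setRamseyCycle r k ℓ := by
  obtain ⟨j, e, rfl, he⟩ : ∃ j e, k = 2 * j + e ∧ e ≤ 1 := ⟨k / 2, k % 2, by omega, by omega⟩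
  refine parity_code_lower (m := 2) (J := Fin 2) (by omega) he hrk hℓ hodd id
    (fun x y h => Or.inl h) ?_
  simp only [Fintype.card_fin]
  omega

/-- Copies of the parity code on `m + 1` bits, followed for odd `k` by the sums `x_0 + x_i`. -/
lemma two_pow_lt {r k ℓ m : ℕ} (hk : 2 ≤ k) (hrk : k ≤ r) (hℓ : 2 ≤ ℓ) (hodd : Odd ℓ)
    (hm : 2 ≤ m) (hr : m * (k - 1) + 2 ≤ r) : 2 ^ (m + 1) < setRamseyCycle r k ℓ := by
  obtain ⟨j, e, rfl, he⟩ : ∃ j e, k = 2 * j + e ∧ e ≤ 1 := ⟨k / 2, k % 2, by omega, by omega⟩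
  have hj : 1 ≤ j := by omega
  refine parity_code_lower (m := m + 1) (J := Fin m) hj he hrk hℓ hodd
    (fun x i => x i.succ + x 0) ?_ ?_
  · intro x y hxy
    by_contra! hcon
    obtain ⟨h1, h2⟩ := hcon
    have h3 : ∀ i : Fin m, x i.succ + x 0 = y i.succ + y 0 := fun i => congrFun h1 i
    -- Equal sums mean that `x + y` is constant, so it is the all-ones string.
    have h0 : x 0 ≠ y 0 := by
      intro h0
      refine hxy (funext fun i => ?_)
      refine Fin.cases h0 (fun i => ?_) i
      have := h3 i
      rw [h0] at this
      exact add_right_cancel this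
    have hall : ∀ i, x i ≠ y i := by
      intro i
      refine Fin.cases h0 (fun i h => ?_) i
      have := h3 i
      rw [h] at this
      exact h0 (add_left_cancel this)
    simp [hall] at h2
    omega
  · simp only [Fintype.card_fin]
    obtain ⟨a, rfl⟩ := Nat.exists_eq_add_of_le hj
    obtain ⟨b, rfl⟩ := Nat.exists_eq_add_of_le hm
    have h1 : 2 * (1 + a) + e - 1 = 2 * a + e + 1 := by omega
    rw [h1] at hr
    nlinarith [Nat.zero_le (a * b)]

/-! ### The block construction -/

/-- Bit strings index groups of `ℓ - 1` vertices; colour `c` lies in block `c / k`, and the colours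
beyond the first `r / k - 1` blocks are all used inside the groups. -/
lemma blocks_lower {r k ℓ : ℕ} (hk : 1 ≤ k) (hrk : k ≤ r) (hℓ : 2 ≤ ℓ) (hodd : Odd ℓ) :
    (ℓ - 1) * 2 ^ (r / k - 1) < setRamseyCycle r k ℓ := by
  have hq : 1 ≤ r / k := (Nat.one_le_div_iff (by omega)).mpr hrk
  obtain ⟨p, hp⟩ : ∃ p, r / k = p + 1 := ⟨r / k - 1, by omega⟩
  have hpr : (p + 1) * k ≤ r := by
    rw [← hp]
    exact Nat.div_mul_le_self r k
  rw [hp, Nat.add_sub_cancel]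
  have block : ∀ t ≤ p, ∀ s : Finset (Fin r), (∀ c : Fin r, c.val / k = t → c ∈ s) →
      k ≤ s.card := by
    intro t ht s hs
    have hlt : ∀ i : Fin k, t * k + i.val < r := fun i => by
      have := i.isLt
      nlinarith [Nat.mul_le_mul_right k ht]
    have := card_le_card_of_injOn (s := (univ : Finset (Fin k))) (t := s)
      (fun i => (⟨t * k + i.val, hlt i⟩ : Fin r)) ?_ ?_
    · simpa using this
    · intro i _
      refine hs _ ?_
      simp only
      rw [mul_comm, Nat.mul_add_div (by omega), Nat.div_eq_of_lt i.isLt, add_zero]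
    · intro i _ i' _ h
      simp only [Fin.mk.injEq] at h
      exact Fin.ext (by omega)
  have h := card_lt_setRamseyCycle hk hrk hℓ (V := Fin (ℓ - 1) × (Fin p → ZMod 2))
    (fun a b => univ.filter fun c : Fin r =>
      if h : c.val / k < p then a.2 ⟨c.val / k, h⟩ ≠ b.2 ⟨c.val / k, h⟩ else a.2 = b.2) ?_ ?_ ?_
  · simpa using h
  · intro a b
    ext c
    simp only [ne_comm, eq_comm]
  · intro a b hab
    by_cases h2 : a.2 = b.2
    · refine block p le_rfl _ fun c hc => ?_
      simp [hc, h2]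
    · obtain ⟨i, hi⟩ := Function.ne_iff.mp h2
      refine block i i.isLt.le _ fun c hc => ?_
      simp [hc, hi]
  · intro c f hinj hf
    by_cases hc : c.val / k < p
    · refine no_odd_cycle hodd (fun j => (f j).2 ⟨c.val / k, hc⟩) fun j => ?_
      simpa [hc] using hf j
    · -- The cycle stays inside one group, which has only `ℓ - 1` vertices.
      have hstep : ∀ i : Fin ℓ, (f i).2 = (f ⟨(i.val + 1) % ℓ, Nat.mod_lt _ i.pos⟩).2 :=
        fun i => by simpa [hc] using hf i
      have hconst : ∀ n (hn : n < ℓ), (f ⟨n, hn⟩).2 = (f ⟨0, by omega⟩).2 := by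
        intro n
        induction n with
        | zero => intro _; rfl
        | succ n ih =>
          intro hn
          have h1 := hstep ⟨n, by omega⟩
          simp only [Nat.mod_eq_of_lt hn] at h1
          rw [← h1, ih]
      have hinj1 : Function.Injective fun i => (f i).1 := fun i i' h =>
        hinj (Prod.ext h ((hconst i i.isLt).trans (hconst i' i'.isLt).symm))
      have := Fintype.card_le_of_injective _ hinj1
      simp at this
      omega

lemma rpow_lower {r k ℓ : ℕ} (hk : 2 ≤ k) (hrk : k ≤ r) (hℓ : 2 ≤ ℓ) (hodd : Odd ℓ) :
    (2 : ℝ) ^ (((r : ℝ) - 1) / ((k : ℝ) - 1)) < (setRamseyCycle r k ℓ : ℝ) := by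
  have hk' : (0 : ℝ) < (k : ℝ) - 1 := by
    have : (2 : ℝ) ≤ k := by exact_mod_cast hk
    linarith
  have h2 : 3 ≤ setRamseyCycle r k ℓ := two_lt (by omega) hrk hℓ hodd
  by_cases hA : 2 * (r - 1) ≤ 3 * (k - 1)
  · have hx : ((r : ℝ) - 1) / ((k : ℝ) - 1) ≤ 3 / 2 := by
      rw [div_le_iff₀ hk']
      have h : 2 * r + 1 ≤ 3 * k := by omega
      have h : (2 : ℝ) * r + 1 ≤ 3 * k := by exact_mod_cast h
      linarith
    have h3 : (2 : ℝ) ^ ((3 : ℝ) / 2) < 3 := by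
      have h4 : ((2 : ℝ) ^ ((3 : ℝ) / 2)) ^ 2 = 8 := by
        rw [← Real.rpow_natCast, ← Real.rpow_mul (by norm_num)]
        norm_num
      by_contra! h5
      nlinarith
    calc (2 : ℝ) ^ (((r : ℝ) - 1) / ((k : ℝ) - 1)) ≤ (2 : ℝ) ^ ((3 : ℝ) / 2) :=
          Real.rpow_le_rpow_of_exponent_le (by norm_num) hx
      _ < 3 := h3
      _ ≤ _ := by exact_mod_cast h2
  -- `m + 1` is the ceiling of `(r - 1) / (k - 1)`.
  obtain ⟨m, hm1, hm2⟩ : ∃ m, r - 1 ≤ (m + 1) * (k - 1) ∧ m * (k - 1) + 1 ≤ r - 1 := by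
    refine ⟨(r - 2) / (k - 1), ?_, ?_⟩
    · have h := Nat.lt_mul_div_succ (r - 2) (show 0 < k - 1 by omega)
      rw [mul_comm] at h
      omega
    · have := Nat.div_mul_le_self (r - 2) (k - 1)
      omega
  have hx : (2 : ℝ) ^ (((r : ℝ) - 1) / ((k : ℝ) - 1)) ≤ ((2 ^ (m + 1) : ℕ) : ℝ) := by
    push_cast
    rw [← Real.rpow_natCast]
    refine Real.rpow_le_rpow_of_exponent_le (by norm_num) ?_
    rw [div_le_iff₀ hk']
    have h : ((r - 1 : ℕ) : ℝ) ≤ (((m + 1) * (k - 1) : ℕ) : ℝ) := by exact_mod_cast hm1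
    rw [Nat.cast_mul, Nat.cast_sub (by omega), Nat.cast_sub (by omega)] at h
    simpa using h
  refine hx.trans_lt ?_
  norm_cast
  rcases Nat.lt_or_ge m 2 with hm | hm
  · have h4 : 4 < setRamseyCycle r k ℓ := four_lt hk hrk hℓ hodd (by omega)
    interval_cases m <;> omega
  · exact two_pow_lt hk hrk hℓ hodd hm (by omega)

/-- **Theorem.** For every odd `ℓ` and all `r ≥ k ≥ 2`, the set-Ramsey number of the
cycle satisfies `R_{r,k}(C_ℓ) > max { 2^((r-1)/(k-1)), 2^(⌊r/k⌋-1)·(ℓ-1) }`, where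
the first power is a real power. -/
theorem setRamseyCycle_lower (r k ℓ : ℕ) (hk : 2 ≤ k) (hrk : k ≤ r)
    (hℓ : 3 ≤ ℓ) (hodd : Odd ℓ) :
    max ((2 : ℝ) ^ (((r : ℝ) - 1) / ((k : ℝ) - 1)))
        ((2 : ℝ) ^ (r / k - 1) * ((ℓ : ℝ) - 1))
      < (setRamseyCycle r k ℓ : ℝ) := by
  refine max_lt (rpow_lower hk hrk (by omega) hodd) ?_
  have h := blocks_lower (ℓ := ℓ) (by omega : 1 ≤ k) hrk (by omega) hodd
  have h : (((ℓ - 1) * 2 ^ (r / k - 1) : ℕ) : ℝ) < (setRamseyCycle r k ℓ : ℝ) := by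
    exact_mod_cast h
  rw [Nat.cast_mul, Nat.cast_sub (by omega)] at h
  push_cast at h
  rwa [mul_comm]
end

section
/- The set-Ramsey number of the triangle for (4,2)-colourings satisfies R_{4,2}(K_3) = 9; that is, every (4,2)-colouring of K_9 contains a monochromatic triangle, and there is a (4,2)-colouring of K_8 with no monochromatic triangle. -/
/-- The graph of the edges of `K_n` whose colour set contains `c`. -/
def colourGraph {n r : ℕ} (φ : Sym2 (Fin n) → Finset (Fin r)) (c : Fin r) :
    SimpleGraph (Fin n) where
  Adj x y := x ≠ y ∧ c ∈ φ s(x, y)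
  symm := ⟨fun x y h => ⟨h.1.symm, by rw [Sym2.eq_swap]; exact h.2⟩⟩
  loopless := ⟨fun _ h => h.1 rfl⟩

instance {n r : ℕ} (φ : Sym2 (Fin n) → Finset (Fin r)) (c : Fin r) :
    DecidableRel (colourGraph φ c).Adj :=
  fun x y => inferInstanceAs (Decidable (x ≠ y ∧ c ∈ φ s(x, y)))

lemma hasMonoClique_of_triangle {n r : ℕ} {φ : Sym2 (Fin n) → Finset (Fin r)} {c : Fin r}
    {x y z : Fin n} (hxy : (colourGraph φ c).Adj x y) (hxz : (colourGraph φ c).Adj x z)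
    (hyz : (colourGraph φ c).Adj y z) : HasMonoClique n r 3 φ := by
  have hadj : ∀ i j : Fin 3, i ≠ j → (colourGraph φ c).Adj (![x, y, z] i) (![x, y, z] j) := by
    intro i j hij
    fin_cases i <;> fin_cases j <;> first
      | exact absurd rfl hij
      | simpa using hxy
      | simpa using hxz
      | simpa using hyz
      | simpa using hxy.symm
      | simpa using hxz.symm
      | simpa using hyz.symm
  refine ⟨c, ⟨![x, y, z], fun i j h => ?_⟩, fun i j hij => (hadj i j hij).2⟩
  by_contra hij
  exact (hadj i j hij).1 h

/-- A regular triangle-free graph of degree `4` on `9` vertices does not exist: it would be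
bipartite by the Andrásfai–Erdős–Sós theorem, with parts of equal size. -/
lemma not_four_regular_triangle_free (G : SimpleGraph (Fin 9)) [DecidableRel G.Adj]
    (hfree : G.CliqueFree 3) (hreg : ∀ v, G.degree v = 4) : False := by
  have hcol : G.Colorable 2 := by
    refine SimpleGraph.colorable_of_cliqueFree_lt_minDegree (r := 2) hfree ?_
    have : 4 ≤ G.minDegree := G.le_minDegree_of_forall_le_degree 4 fun v => (hreg v).ge
    simp
    omega
  obtain ⟨C⟩ := hcol
  have hbip : G.IsBipartiteWith (↑(Finset.univ.filter fun v => C v = 0) : Set (Fin 9))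
      ↑(Finset.univ.filter fun v => ¬ C v = 0) := by
    refine ⟨?_, fun v w h => ?_⟩
    · rw [Finset.disjoint_coe]
      exact Finset.disjoint_filter_filter_not _ _ _
    · have := C.valid h
      simp only [Finset.coe_filter, Finset.mem_univ, true_and, Set.mem_ofPred_eq]
      omega
  have hsum := SimpleGraph.isBipartiteWith_sum_degrees_eq hbip
  simp only [hreg, Finset.sum_const, smul_eq_mul] at hsum
  have hcard := Finset.card_filter_add_card_filter_not (s := (Finset.univ : Finset (Fin 9)))
    (fun v => C v = 0)
  simp only [Finset.card_univ, Fintype.card_fin] at hcard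
  omega

/-- Two pairs of colours that both avoid a given one of the four colours intersect. -/
lemma pairs_avoiding_meet : ∀ (c : Fin 4) (s t : Finset (Fin 4)), s.card = 2 → t.card = 2 →
    c ∉ s → c ∉ t → ∃ d, d ∈ s ∧ d ∈ t := by
  decide

lemma degree_le_four {n : ℕ} {φ : Sym2 (Fin n) → Finset (Fin 4)} (hφ : IsSetColoring n 4 2 φ)
    (hno : ¬ HasMonoClique n 4 3 φ) (c : Fin 4) (v : Fin n) : (colourGraph φ c).degree v ≤ 4 := by
  by_contra! hdeg
  set N := (colourGraph φ c).neighborFinset v with hN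
  have hNcard : 4 < N.card := hdeg
  have hcard : ∀ x y, x ≠ y → (φ s(x, y)).card = 2 := fun x y h => hφ _ (by simpa using h)
  have havoid : ∀ x ∈ N, ∀ y ∈ N, x ≠ y → c ∉ φ s(x, y) := fun x hx y hy hxy hc =>
    hno (hasMonoClique_of_triangle ((SimpleGraph.mem_neighborFinset _ _ _).1 hx)
      ((SimpleGraph.mem_neighborFinset _ _ _).1 hy) ⟨hxy, hc⟩)
  obtain ⟨x, hx⟩ : N.Nonempty := Finset.card_pos.1 (by omega)
  -- There are only three pairs of colours avoiding `c`, so two edges at `x` get the same pair.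
  obtain ⟨y, hy, z, hz, hyz, heq⟩ := Finset.exists_ne_map_eq_of_card_lt_of_maps_to
    (s := N.erase x) (t := (Finset.univ.erase c).powersetCard 2) (f := fun y => φ s(x, y))
    (by
      rw [Finset.card_powersetCard, Finset.card_erase_of_mem (Finset.mem_univ c),
        Finset.card_erase_of_mem hx, Finset.card_univ, Fintype.card_fin,
        show Nat.choose (4 - 1) 2 = 3 from rfl]
      omega)
    (by
      intro y hy
      have hy' := Finset.mem_erase.1 hy
      rw [Finset.mem_coe, Finset.mem_powersetCard]
      refine ⟨fun d hd => Finset.mem_erase.2 ⟨?_, Finset.mem_univ d⟩, hcard x y hy'.1.symm⟩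
      rintro rfl
      exact havoid x hx y hy'.2 hy'.1.symm hd)
  obtain ⟨hyx, hyN⟩ := Finset.mem_erase.1 hy
  obtain ⟨hzx, hzN⟩ := Finset.mem_erase.1 hz
  obtain ⟨d, hd, hd'⟩ := pairs_avoiding_meet c _ _ (hcard x y hyx.symm) (hcard y z hyz)
    (havoid x hx y hyN hyx.symm) (havoid y hyN z hzN hyz)
  exact hno (hasMonoClique_of_triangle (c := d) ⟨hyx.symm, hd⟩
    ⟨hzx.symm, by have h : φ s(x, y) = φ s(x, z) := heq; rwa [← h]⟩ ⟨hyz, hd'⟩)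

/-- Double counting of the pairs (edge at `v`, colour of that edge). -/
lemma sum_degree {n r k : ℕ} {φ : Sym2 (Fin n) → Finset (Fin r)} (hφ : IsSetColoring n r k φ)
    (v : Fin n) : ∑ c, (colourGraph φ c).degree v = (n - 1) * k := by
  have h1 : ∀ c, (colourGraph φ c).degree v
      = ∑ w ∈ Finset.univ.erase v, if c ∈ φ s(v, w) then 1 else 0 := by
    intro c
    rw [← Finset.card_filter, ← SimpleGraph.card_neighborFinset_eq_degree]
    congr 1
    ext w
    rw [SimpleGraph.mem_neighborFinset]
    simp [colourGraph, eq_comm]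
  simp only [h1]
  rw [Finset.sum_comm]
  have h2 : ∀ w ∈ Finset.univ.erase v, (∑ c, if c ∈ φ s(v, w) then 1 else 0) = k := by
    intro w hw
    rw [← Finset.card_filter, Finset.filter_mem_eq_inter, Finset.univ_inter]
    exact hφ _ (by simpa using (Finset.ne_of_mem_erase hw).symm)
  rw [Finset.sum_congr rfl h2]
  simp

lemma hasMonoClique_nine (φ : Sym2 (Fin 9) → Finset (Fin 4)) (hφ : IsSetColoring 9 4 2 φ) :
    HasMonoClique 9 4 3 φ := by
  by_contra hno
  refine not_four_regular_triangle_free (colourGraph φ 0) ?_ fun v => ?_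
  · intro s hs
    obtain ⟨x, y, z, hxy, hxz, hyz, -⟩ := SimpleGraph.is3Clique_iff.1 hs
    exact hno (hasMonoClique_of_triangle hxy hxz hyz)
  · have hsum := sum_degree hφ v
    rw [Fin.sum_univ_four] at hsum
    have h := fun c => degree_le_four hφ hno c v
    have h0 := h 0
    have h1 := h 1
    have h2 := h 2
    have h3 := h 3
    omega

/-- Letter number `i` of the `x`-th even-weight word of length `4`; the words are read off the
binary expansions of `0, 3, 5, 6, 9, 10, 12, 15`. -/
def evenWord (x : Fin 8) (i : Fin 4) : Bool :=
  ((![0, 3, 5, 6, 9, 10, 12, 15] : Fin 8 → ℕ) x).testBit i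

/-- Two of the positions in which two even-weight words differ: all of them if there are two,
and the first two if there are four. -/
def diffPair (x y : Fin 8) : Finset (Fin 4) :=
  let D := Finset.univ.filter fun i => evenWord x i ≠ evenWord y i
  if D = Finset.univ then {0, 1} else D

lemma diffPair_comm (x y : Fin 8) : diffPair x y = diffPair y x := by
  simp only [diffPair, ne_comm]

lemma ne_of_mem_diffPair {x y : Fin 8} {c : Fin 4} (h : c ∈ diffPair x y) :
    evenWord x c ≠ evenWord y c := by
  suffices c ∈ Finset.univ.filter fun i => evenWord x i ≠ evenWord y i from
    (Finset.mem_filter.1 this).2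
  simp only [diffPair] at h
  split_ifs at h with hD
  · rw [hD]
    exact Finset.mem_univ c
  · exact h

lemma card_diffPair : ∀ x y : Fin 8, x ≠ y → (diffPair x y).card = 2 := by
  decide

lemma exists_colouring_eight :
    ∃ φ : Sym2 (Fin 8) → Finset (Fin 4), IsSetColoring 8 4 2 φ ∧ ¬ HasMonoClique 8 4 3 φ := by
  refine ⟨Sym2.lift ⟨diffPair, diffPair_comm⟩, fun e => ?_, ?_⟩
  · induction e using Sym2.ind with
    | _ x y => exact fun h => card_diffPair x y (by simpa using h)
  · rintro ⟨c, f, hf⟩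
    have h01 := ne_of_mem_diffPair (hf 0 1 (by decide))
    have h02 := ne_of_mem_diffPair (hf 0 2 (by decide))
    have h12 := ne_of_mem_diffPair (hf 1 2 (by decide))
    generalize evenWord (f 0) c = a at *
    generalize evenWord (f 1) c = b at *
    generalize evenWord (f 2) c = d at *
    revert a b d
    decide

/-- Restricting a colouring without monochromatic clique to fewer vertices. -/
lemma exists_colouring_mono {m n r k t : ℕ} (hmn : m ≤ n)
    (h : ∃ φ : Sym2 (Fin n) → Finset (Fin r), IsSetColoring n r k φ ∧ ¬ HasMonoClique n r t φ) :
    ∃ φ : Sym2 (Fin m) → Finset (Fin r), IsSetColoring m r k φ ∧ ¬ HasMonoClique m r t φ := by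
  obtain ⟨φ, hφ, hno⟩ := h
  refine ⟨fun e => φ (e.map (Fin.castLE hmn)), fun e => ?_, ?_⟩
  · induction e using Sym2.ind with
    | _ x y => exact fun h => hφ _ (by simpa using h)
  · rintro ⟨c, f, hf⟩
    exact hno ⟨c, f.trans (Fin.castLEEmb hmn), fun i j hij => by simpa using hf i j hij⟩

/-- **Corollary (R₄,₂(K₃) = 9).** Every `(4,2)`-colouring of `K_9` contains a
monochromatic triangle, and there is a `(4,2)`-colouring of `K_8` with no
monochromatic triangle; hence `R_{4,2}(K_3) = 9`. -/
theorem setRamsey_four_two_triangle :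
    (∀ φ : Sym2 (Fin 9) → Finset (Fin 4), IsSetColoring 9 4 2 φ → HasMonoClique 9 4 3 φ) ∧
    (∃ φ : Sym2 (Fin 8) → Finset (Fin 4), IsSetColoring 8 4 2 φ ∧ ¬ HasMonoClique 8 4 3 φ) ∧
    setRamseyClique 4 2 3 = 9 := by
  refine ⟨hasMonoClique_nine, exists_colouring_eight, le_antisymm ?_ ?_⟩
  · exact Nat.sInf_le hasMonoClique_nine
  · refine le_csInf ⟨9, hasMonoClique_nine⟩ fun n hn => ?_
    by_contra! hlt
    obtain ⟨φ, hφ, hno⟩ := exists_colouring_mono (Nat.le_of_lt_succ hlt) exists_colouring_eight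
    exact hno (hn φ hφ)
end
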